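/- Let X be a standard Borel space, E a countable Borel equivalence relation on X, and ρ : E → (0,∞) a smooth Borel cocycle. Then there is an E-invariant Borel set B ⊆ X such that E restricted to the complement of B is smooth and there is a strictly (ρ restricted to E|B)-increasing Borel automorphism of B. -/

import Mathlib

/-!
Through `log ρ`, a Borel colouring witnessing smoothness of `ρ` makes every colour class inside an
`E`-class an `ε`-separated subset of `ℝ`. Ordering each of these sets by `ρ` gives a Borel partial
order on `X` whose intervals are finite, so the passage to the next larger point is a Borel partial
injection. It is a bijection on the union `B` of those `E`-classes on which no point is maximal or
minimal. Each remaining class contains an extremal point, at most one maximal and one minimal point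
per colour, and selecting one of least colour gives a transversal.

In place of Lusin–Novikov uniformization, the pair `(c y, ⌊log (ρ y x) / ε⌋)` determines `y` from
`x`, which writes `E` as a countable union of Borel graphs.
-/

open MeasureTheory Set ENNReal

namespace CocycleNadkarni

variable {X : Type*} {Γ : Type*}

/-- The `ρ`-size of `Y` relative to the point `z`: `∑_{y ∈ Y} ρ(y, z)`. -/
noncomputable def eSize (ρ : X → X → ℝ) (Y : Set X) (z : X) : ℝ≥0∞ :=
  ∑' y : Y, ENNReal.ofReal (ρ y z)

/-- The `ρ`-size of `Y` relative to the set `Z`, computed at the point `z`. -/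
noncomputable def relSize (ρ : X → X → ℝ) (Y Z : Set X) (z : X) : ℝ≥0∞ :=
  eSize ρ Y z / eSize ρ Z z

/-- Real-valued `ρ`-size (used for finite sets). -/
noncomputable def rSize (ρ : X → X → ℝ) (Y : Set X) (z : X) : ℝ :=
  ∑' y : Y, ρ y z

/-- `∫_C f dμ^ρ_S`, computed at the point `z`. -/
noncomputable def avgOn (ρ : X → X → ℝ) (f : X → ℝ) (S C : Set X) (z : X) : ℝ :=
  (∑' y : ↥(S ∩ C), f y * ρ y z) / rSize ρ S z

/-- countable Borel equivalence relation -/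
def IsCBER [MeasurableSpace X] (E : X → X → Prop) : Prop :=
  Equivalence E ∧ MeasurableSet {p : X × X | E p.1 p.2} ∧ ∀ x : X, {y | E x y}.Countable

/-- Borel cocycle `ρ : E → (0, ∞)` (as a total function whose values off `E` are irrelevant). -/
def IsCocycle [MeasurableSpace X] (E : X → X → Prop) (ρ : X → X → ℝ) : Prop :=
  Measurable (fun p : X × X => ρ p.1 p.2) ∧
    (∀ ⦃x y : X⦄, E x y → 0 < ρ x y) ∧
    ∀ ⦃x y z : X⦄, E x y → E y z → ρ x z = ρ x y * ρ y z

/-- Borel cocycle into a group `Γ`. -/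
def IsGrpCocycle [MeasurableSpace X] [Group Γ] [MeasurableSpace Γ]
    (E : X → X → Prop) (ρ : X → X → Γ) : Prop :=
  Measurable (fun p : X × X => ρ p.1 p.2) ∧
    ∀ ⦃x y z : X⦄, E x y → E y z → ρ x z = ρ x y * ρ y z

/-- finite Borel subequivalence relation of `E` -/
def IsFinSubequiv [MeasurableSpace X] (E F : X → X → Prop) : Prop :=
  Equivalence F ∧ MeasurableSet {p : X × X | F p.1 p.2} ∧
    (∀ ⦃x y : X⦄, F x y → E x y) ∧ ∀ x : X, {y | F x y}.Finite

/-- finite Borel subequivalence relation of `E` restricted to `W` (extended by the diagonal). -/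
def IsFinSubequivOn [MeasurableSpace X] (E : X → X → Prop) (W : Set X)
    (F : X → X → Prop) : Prop :=
  Equivalence F ∧ MeasurableSet {p : X × X | F p.1 p.2} ∧
    (∀ ⦃x y : X⦄, F x y → x = y ∨ (E x y ∧ x ∈ W ∧ y ∈ W)) ∧ ∀ x : X, {y | F x y}.Finite

/-- `ρ`-invariance of a Borel measure. -/
def IsInvariant [MeasurableSpace X] (E : X → X → Prop) (ρ : X → X → ℝ)
    (μ : Measure X) : Prop :=
  ∀ T : X ≃ᵐ X, (∀ x, E (T x) x) → ∀ B : Set X, MeasurableSet B →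
    μ (T '' B) = ∫⁻ x in B, ENNReal.ofReal (ρ (T x) x) ∂μ

/-- invariance w.r.t. the restriction of `ρ` to a set `R` of pairs, via Borel injections
whose graphs are contained in `R⁻¹`. -/
def IsInvariantRel [MeasurableSpace X] (R : Set (X × X)) (ρ : X → X → ℝ)
    (μ : Measure X) : Prop :=
  ∀ (B : Set X) (T : X → X), MeasurableSet B → Measurable T → Set.InjOn T B →
    (∀ x ∈ B, ((T x, x) : X × X) ∈ R) →
    μ (T '' B) = ∫⁻ x in B, ENNReal.ofReal (ρ (T x) x) ∂μ

/-- a Borel ℕ-coloring of the lacunarity digraph `G^ρ_Z`. -/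
def HasColoring [MeasurableSpace X] (E : X → X → Prop) (ρ : X → X → Γ)
    (Z : Set Γ) : Prop :=
  ∃ c : X → ℕ, Measurable c ∧
    ∀ ⦃x y : X⦄, x ≠ y → E x y → ρ x y ∈ Z → c x ≠ c y

/-- smoothness of the cocycle `ρ` restricted to `E` restricted to `W`. -/
def SmoothOn [MeasurableSpace X] (E : X → X → Prop) (ρ : X → X → ℝ)
    (W : Set X) : Prop :=
  ∃ U : Set ℝ, IsOpen U ∧ (1:ℝ) ∈ U ∧ U ⊆ Set.Ioi 0 ∧
    ∃ c : X → ℕ, Measurable c ∧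
      ∀ ⦃x y : X⦄, x ∈ W → y ∈ W → x ≠ y → E x y → ρ x y ∈ U → c x ≠ c y

/-- smoothness of the cocycle `ρ` on `E`. -/
def Smooth [MeasurableSpace X] (E : X → X → Prop) (ρ : X → X → ℝ) : Prop :=
  SmoothOn E ρ Set.univ

/-- `E`-invariance of a set. -/
def EInvariant (E : X → X → Prop) (B : Set X) : Prop :=
  ∀ ⦃x y : X⦄, E x y → x ∈ B → y ∈ B

/-- a compression of `ρ` over the finite subequivalence relation `F` of `E`. -/
def CompressionOver [MeasurableSpace X] (E F : X → X → Prop) (ρ : X → X → ℝ)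
    (φ : X → X) : Prop :=
  (∀ x, E x (φ x)) ∧
  (∀ x : X, relSize ρ (φ ⁻¹' {y | F y x}) {y | F y x} x ≤ 1) ∧
  (∀ x : X, ∃ y, E x y ∧ relSize ρ (φ ⁻¹' {z | F z y}) {z | F z y} y < 1)

/-- a compression of the quotient of `ρ | E | W` by the finite subequivalence relation given
by the setoid `s`, expressed via representatives. -/
def QuotCompressionOn [MeasurableSpace X] (E : X → X → Prop) (ρ : X → X → ℝ)
    (W : Set X) (s : Setoid X) (φ : Quotient s → Quotient s) : Prop :=
  (∀ ⦃x : X⦄, x ∈ W → ∀ y : X, φ (Quotient.mk s x) = Quotient.mk s y → (E x y ∧ y ∈ W)) ∧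
  (∀ ⦃x : X⦄, x ∈ W →
    relSize ρ {y | y ∈ W ∧ φ (Quotient.mk s y) = Quotient.mk s x} {y | s.r y x} x ≤ 1) ∧
  (∀ ⦃x : X⦄, x ∈ W → ∃ y, y ∈ W ∧ E x y ∧
    relSize ρ {z | z ∈ W ∧ φ (Quotient.mk s z) = Quotient.mk s y} {z | s.r z y} y < 1)


/-- `B` has `ρ`-density at least `ε` relative to `W`. -/
def HasDensityAtLeastOn [MeasurableSpace X] (E : X → X → Prop) (ρ : X → X → ℝ)
    (B W : Set X) (ε : ℝ) : Prop :=
  ∃ F : X → X → Prop, IsFinSubequivOn E W F ∧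
    ∀ x ∈ W, ENNReal.ofReal ε ≤ relSize ρ (B ∩ {y | F y x}) {y | F y x} x

/-- `B` has positive `ρ`-density relative to `W`. -/
def HasPosDensityOn [MeasurableSpace X] (E : X → X → Prop) (ρ : X → X → ℝ)
    (B W : Set X) : Prop :=
  ∃ ε : ℝ, 0 < ε ∧ HasDensityAtLeastOn E ρ B W ε

/-- `B` has σ-positive `ρ`-density relative to `W`. -/
def HasSigmaPosDensityOn [MeasurableSpace X] (E : X → X → Prop) (ρ : X → X → ℝ)
    (B W : Set X) : Prop :=
  ∃ A : ℕ → Set X, (∀ n, MeasurableSet (A n)) ∧ (∀ n, A n ⊆ W) ∧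
    (∀ n, ∀ x ∈ A n, ∀ y ∈ W, E x y → y ∈ A n) ∧ W = ⋃ n, A n ∧
    ∀ n, HasPosDensityOn E ρ (B ∩ A n) (A n)

section CountableUnionOfGraphs

variable {Y W : Type*} [MeasurableSpace X] [MeasurableSpace Y] [MeasurableSpace W]

/-- `R ⊆ X × Y` is a union of countably many graphs of partial Borel functions from `X` to `Y`.
This is the form in which Lusin–Novikov uniformization presents a Borel set with countable vertical
sections; each function is encoded by its graph, a Borel set on which `Prod.fst` is injective. -/
def IsCountableUnionOfGraphs (R : Set (X × Y)) : Prop :=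
  ∃ D : ℕ → Set (X × Y),
    (∀ n, MeasurableSet (D n)) ∧ (∀ n, InjOn Prod.fst (D n)) ∧ R = ⋃ n, D n

theorem isCountableUnionOfGraphs_of_injOn {ι : Type*} [Countable ι] [MeasurableSpace ι]
    [MeasurableSingletonClass ι] {R : Set (X × Y)} (hR : MeasurableSet R) {κ : X × Y → ι}
    (hκ : Measurable κ) (hinj : InjOn (fun p ↦ (p.1, κ p)) R) :
    IsCountableUnionOfGraphs R := by
  obtain ⟨e, he⟩ := exists_injective_nat ι
  refine ⟨fun n ↦ R ∩ (e ∘ κ) ⁻¹' {n}, fun n ↦ ?_, fun n p hp q hq hpq ↦ ?_, ?_⟩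
  · exact hR.inter (((measurable_of_countable e).comp hκ) (measurableSet_singleton n))
  · exact hinj hp.1 hq.1 (Prod.ext hpq (he (hp.2.trans hq.2.symm)))
  · rw [← inter_iUnion, ← preimage_iUnion, iUnion_of_singleton, preimage_univ, inter_univ]

namespace IsCountableUnionOfGraphs

variable {R S : Set (X × Y)}

theorem measurableSet (hR : IsCountableUnionOfGraphs R) : MeasurableSet R := by
  obtain ⟨D, hD, -, rfl⟩ := hR
  exact .iUnion hD

theorem mono (hR : IsCountableUnionOfGraphs R) (hS : MeasurableSet S) (hSR : S ⊆ R) :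
    IsCountableUnionOfGraphs S := by
  obtain ⟨D, hD, hinj, rfl⟩ := hR
  refine ⟨fun n ↦ S ∩ D n, fun n ↦ hS.inter (hD n), fun n ↦ (hinj n).mono inter_subset_right, ?_⟩
  rw [← inter_iUnion, inter_eq_left.2 hSR]

theorem measurableSet_exists [StandardBorelSpace Y] [StandardBorelSpace W]
    (hR : IsCountableUnionOfGraphs R) {g : W → X} (hg : Measurable g) {P : Set (W × Y)}
    (hP : MeasurableSet P) : MeasurableSet {w | ∃ y, (g w, y) ∈ R ∧ (w, y) ∈ P} := by
  obtain ⟨D, hD, hinj, rfl⟩ := hR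
  have h_image : {w | ∃ y, (g w, y) ∈ ⋃ n, D n ∧ (w, y) ∈ P} =
      ⋃ n, Prod.fst '' (Prod.map g id ⁻¹' D n ∩ P) := by
    ext w
    simp only [mem_iUnion, mem_ofPred_eq, mem_image, mem_inter_iff, mem_preimage, Prod.exists,
      Prod.map_apply, id_eq, exists_and_right, exists_eq_right]
    tauto
  rw [h_image]
  refine .iUnion fun n ↦ ((hg.prodMap measurable_id (hD n)).inter hP).image_of_measurable_injOn
    measurable_fst ?_
  rintro ⟨w, y⟩ ⟨hy, -⟩ ⟨_, z⟩ ⟨hz, -⟩ rfl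
  exact Prod.ext rfl (Prod.ext_iff.1 (hinj n hy hz rfl)).2

theorem measurableSet_domain [StandardBorelSpace X] [StandardBorelSpace Y]
    (hR : IsCountableUnionOfGraphs R) : MeasurableSet {x | ∃ y, (x, y) ∈ R} := by
  simpa using hR.measurableSet_exists measurable_id MeasurableSet.univ

end IsCountableUnionOfGraphs

end CountableUnionOfGraphs

section BorelBijections

variable [MeasurableSpace X] [StandardBorelSpace X]

theorem measurable_of_measurableSet_graph {Y : Type*} [MeasurableSpace Y] [StandardBorelSpace Y]
    {f : X → Y} (hf : MeasurableSet {p : X × Y | f p.1 = p.2}) : Measurable f := by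
  intro A hA
  have h_preimage : f ⁻¹' A = Prod.fst '' ({p : X × Y | f p.1 = p.2} ∩ Prod.snd ⁻¹' A) := by
    ext x
    simp
  rw [h_preimage]
  refine (hf.inter (measurable_snd hA)).image_of_measurable_injOn measurable_fst ?_
  rintro p ⟨hp, -⟩ q ⟨hq, -⟩ hpq
  exact Prod.ext hpq (hp.symm.trans ((congrArg f hpq).trans hq))

theorem exists_measurableEquiv_of_existsUnique {Y : Type*} [MeasurableSpace Y]
    [StandardBorelSpace Y] {r : X → Y → Prop} (hr : MeasurableSet {p : X × Y | r p.1 p.2})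
    (hright : ∀ x, ∃! y, r x y) (hleft : ∀ y, ∃! x, r x y) :
    ∃ T : X ≃ᵐ Y, ∀ x y, T x = y ↔ r x y := by
  choose f hf hf_unique using hright
  choose g hg hg_unique using hleft
  have hf_iff : ∀ x y, f x = y ↔ r x y :=
    fun x y ↦ ⟨fun h ↦ h ▸ hf x, fun h ↦ (hf_unique x y h).symm⟩
  have hg_iff : ∀ y x, g y = x ↔ r x y :=
    fun y x ↦ ⟨fun h ↦ h ▸ hg y, fun h ↦ (hg_unique y x h).symm⟩
  refine ⟨⟨⟨f, g, fun x ↦ (hg_iff _ _).2 (hf x), fun y ↦ (hf_iff _ _).2 (hg y)⟩,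
    measurable_of_measurableSet_graph ?_, measurable_of_measurableSet_graph ?_⟩, hf_iff⟩
  · simpa only [Equiv.coe_fn_mk, hf_iff] using hr
  · simp only [Equiv.coe_fn_symm_mk, hg_iff]
    exact hr.preimage measurable_swap

theorem exists_measurableEquiv_of_existsUnique_mem {r : X → X → Prop} {B : Set X}
    (hr : MeasurableSet {p : X × X | r p.1 p.2}) (hB : MeasurableSet B)
    (hright : ∀ x ∈ B, ∃! y, y ∈ B ∧ r x y) (hleft : ∀ y ∈ B, ∃! x, x ∈ B ∧ r x y) :
    ∃ T : X ≃ᵐ X, ∀ x ∈ B, (T x ∈ B ∧ r x (T x)) ∧ (T.symm x ∈ B ∧ r (T.symm x) x) := by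
  let s (x y : X) : Prop := (x ∈ B ∧ y ∈ B ∧ r x y) ∨ (x ∉ B ∧ x = y)
  have hs : MeasurableSet {p : X × X | s p.1 p.2} :=
    ((measurable_fst hB).inter ((measurable_snd hB).inter hr)).union
      ((measurable_fst hB.compl).inter measurableSet_diagonal)
  have hs_right : ∀ x, ∃! y, s x y := by
    intro x
    by_cases hx : x ∈ B
    · simpa [s, hx] using hright x hx
    · simp [s, hx]
  have hs_left : ∀ y, ∃! x, s x y := by
    intro y
    by_cases hy : y ∈ B
    · have h_iff : ∀ x, s x y ↔ x ∈ B ∧ r x y := fun x ↦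
        ⟨by rintro (⟨hx, -, h⟩ | ⟨hx, rfl⟩); exacts [⟨hx, h⟩, absurd hy hx],
          fun h ↦ .inl ⟨h.1, hy, h.2⟩⟩
      simpa only [h_iff] using hleft y hy
    · exact ⟨y, .inr ⟨hy, rfl⟩, by rintro x (⟨-, h, -⟩ | ⟨-, h⟩); exacts [absurd h hy, h]⟩
  obtain ⟨T, hT⟩ := exists_measurableEquiv_of_existsUnique hs hs_right hs_left
  refine ⟨T, fun x hx ↦ ⟨?_, ?_⟩⟩
  · exact (((hT x _).1 rfl).resolve_right fun h ↦ h.1 hx).2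
  · obtain ⟨h_mem, -, h_rel⟩ | ⟨h_not_mem, h_eq⟩ := (hT _ x).1 (T.apply_symm_apply x)
    exacts [⟨h_mem, h_rel⟩, absurd (by rwa [h_eq]) h_not_mem]

end BorelBijections

theorem exists_transversal_of_coloring [MeasurableSpace X] [StandardBorelSpace X]
    {E : X → X → Prop} (hE : Equivalence E)
    (hgraphs : IsCountableUnionOfGraphs {p : X × X | E p.1 p.2}) {N : Set X}
    (hN : MeasurableSet N) {k : X → ℕ} (hk : Measurable k)
    (hinj : ∀ ⦃x y⦄, x ∈ N → y ∈ N → E x y → k x = k y → x = y) :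
    ∃ T : Set X, MeasurableSet T ∧ T ⊆ N ∧ ∀ x, (∃ z, E x z ∧ z ∈ N) → ∃! y, y ∈ T ∧ E x y := by
  have h_smaller : MeasurableSet {x | ∃ z, E x z ∧ z ∈ N ∧ k z < k x} :=
    hgraphs.measurableSet_exists measurable_id
      ((measurable_snd hN).inter
        (measurableSet_lt (hk.comp measurable_snd) (hk.comp measurable_fst)))
  refine ⟨N \ {x | ∃ z, E x z ∧ z ∈ N ∧ k z < k x}, hN.diff h_smaller, sdiff_subset, ?_⟩
  intro x hx
  obtain ⟨y, ⟨hxy, hyN⟩, hy_min⟩ := exists_minimalFor_of_wellFoundedLT (fun z ↦ E x z ∧ z ∈ N) k hx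
  refine ⟨y, ⟨⟨hyN, ?_⟩, hxy⟩, ?_⟩
  · rintro ⟨z, hyz, hzN, hlt⟩
    exact hlt.not_ge (hy_min ⟨hE.trans hxy hyz, hzN⟩ hlt.le)
  · rintro z ⟨⟨hzN, hz_min⟩, hxz⟩
    have hzy : E z y := hE.trans (hE.symm hxz) hxy
    have hle : k z ≤ k y := not_lt.1 fun hlt ↦ hz_min ⟨y, hzy, hyN, hlt⟩
    exact hinj hzN hyN hzy (hle.antisymm (hy_min ⟨hxz, hzN⟩ hle))

section BorelOrder

theorem isStronglyAtomic_of_locallyFiniteOrder [PartialOrder X] [LocallyFiniteOrder X] :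
    IsStronglyAtomic X where
  exists_covBy_le_of_lt _ _ h :=
    let ⟨z, hxz, hzy⟩ := Relation.TransGen.head'_iff.1 (transGen_covBy_of_lt h)
    ⟨z, hxz, le_iff_reflTransGen_covBy.2 hzy⟩

theorem isStronglyCoatomic_of_locallyFiniteOrder [PartialOrder X] [LocallyFiniteOrder X] :
    IsStronglyCoatomic X :=
  isStronglyAtomic_dual_iff_is_stronglyCoatomic.1 isStronglyAtomic_of_locallyFiniteOrder

variable [MeasurableSpace X]

theorem measurableSet_isMax [Preorder X] [StandardBorelSpace X]
    (h : IsCountableUnionOfGraphs {p : X × X | p.1 < p.2}) : MeasurableSet {x : X | IsMax x} := by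
  simpa only [mem_ofPred_eq, ← not_isMax_iff, ← compl_ofPred, compl_compl] using
    h.measurableSet_domain.compl

theorem measurableSet_isMin [Preorder X] [StandardBorelSpace X]
    (h : IsCountableUnionOfGraphs {p : X × X | p.2 < p.1}) : MeasurableSet {x : X | IsMin x} := by
  simpa only [mem_ofPred_eq, ← not_isMin_iff, ← compl_ofPred, compl_compl] using
    h.measurableSet_domain.compl

theorem measurableSet_covBy [Preorder X] [StandardBorelSpace X]
    (h : IsCountableUnionOfGraphs {p : X × X | p.1 < p.2}) :
    MeasurableSet {p : X × X | p.1 ⋖ p.2} := by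
  have h_between : MeasurableSet {p : X × X | ∃ z, p.1 < z ∧ z < p.2} :=
    h.measurableSet_exists measurable_fst
      ((measurable_snd.prodMk (measurable_snd.comp measurable_fst)) h.measurableSet)
  have h_eq : {p : X × X | p.1 ⋖ p.2} = {p | p.1 < p.2} \ {p | ∃ z, p.1 < z ∧ z < p.2} := by
    ext p
    simp [CovBy]
  exact h_eq ▸ h.measurableSet.diff h_between

end BorelOrder

section ChainColoring

variable [PartialOrder X] {E : X → X → Prop} {c : X → ℕ}

/-- The comparability classes of the partial order on `X` are exactly the colour classes of `c`
inside the `E`-classes; in particular each of them is a chain. -/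
def IsChainColoring (E : X → X → Prop) (c : X → ℕ) : Prop :=
  ∀ ⦃x y⦄, (x ≤ y ∨ y ≤ x) ↔ E x y ∧ c x = c y

/-- The union of the `E`-classes containing neither maximal nor minimal points of the order. -/
def extremeFreePart (E : X → X → Prop) : Set X :=
  {x | ∃ z, E x z ∧ (IsMax z ∨ IsMin z)}ᶜ

theorem not_isMax_of_mem_extremeFreePart (hE : Equivalence E) {x : X}
    (hx : x ∈ extremeFreePart E) : ¬ IsMax x :=
  fun h ↦ hx ⟨x, hE.refl x, .inl h⟩

theorem not_isMin_of_mem_extremeFreePart (hE : Equivalence E) {x : X}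
    (hx : x ∈ extremeFreePart E) : ¬ IsMin x :=
  fun h ↦ hx ⟨x, hE.refl x, .inr h⟩

theorem eInvariant_extremeFreePart (hE : Equivalence E) : EInvariant E (extremeFreePart E) :=
  fun _ _ hxy hx ⟨z, hyz, hz⟩ ↦ hx ⟨z, hE.trans hxy hyz, hz⟩

namespace IsChainColoring

theorem rel_of_le (h : IsChainColoring E c) {x y : X} (hxy : x ≤ y) : E x y :=
  (h.1 (.inl hxy)).1

theorem eq_of_isMax (h : IsChainColoring E c) {x y : X} (hx : IsMax x) (hy : IsMax y)
    (hxy : E x y) (hc : c x = c y) : x = y :=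
  (h.2 ⟨hxy, hc⟩).elim hx.eq_of_le hy.eq_of_ge

theorem eq_of_isMin (h : IsChainColoring E c) {x y : X} (hx : IsMin x) (hy : IsMin y)
    (hxy : E x y) (hc : c x = c y) : x = y :=
  (h.2 ⟨hxy, hc⟩).elim hy.eq_of_le hx.eq_of_ge

theorem covBy_right_unique (hE : Equivalence E) (h : IsChainColoring E c) {x y z : X}
    (hy : x ⋖ y) (hz : x ⋖ z) : y = z := by
  obtain ⟨hEy, hcy⟩ := h.1 (.inl hy.le)
  obtain ⟨hEz, hcz⟩ := h.1 (.inl hz.le)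
  obtain hyz | hzy := h.2 ⟨hE.trans (hE.symm hEy) hEz, hcy.symm.trans hcz⟩
  · exact (hz.eq_or_eq hy.le hyz).resolve_left hy.ne'
  · exact ((hy.eq_or_eq hz.le hzy).resolve_left hz.ne').symm

theorem covBy_left_unique (hE : Equivalence E) (h : IsChainColoring E c) {x y z : X}
    (hx : x ⋖ z) (hy : y ⋖ z) : x = y := by
  obtain ⟨hEx, hcx⟩ := h.1 (.inl hx.le)
  obtain ⟨hEy, hcy⟩ := h.1 (.inl hy.le)
  obtain hxy | hyx := h.2 ⟨hE.trans hEx (hE.symm hEy), hcx.trans hcy.symm⟩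
  · exact ((hx.eq_or_eq hxy hy.le).resolve_right hy.ne).symm
  · exact (hy.eq_or_eq hyx hx.le).resolve_right hx.ne

variable [MeasurableSpace X]

theorem isCountableUnionOfGraphs_lt (h : IsChainColoring E c)
    (hgraphs : IsCountableUnionOfGraphs {p : X × X | E p.1 p.2})
    (hle : MeasurableSet {p : X × X | p.1 ≤ p.2}) :
    IsCountableUnionOfGraphs {p : X × X | p.1 < p.2} := by
  refine hgraphs.mono ?_ fun p hp ↦ h.rel_of_le hp.le
  simp only [lt_iff_le_not_ge]
  exact hle.inter (hle.preimage measurable_swap).compl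

theorem isCountableUnionOfGraphs_gt (hE : Equivalence E) (h : IsChainColoring E c)
    (hgraphs : IsCountableUnionOfGraphs {p : X × X | E p.1 p.2})
    (hle : MeasurableSet {p : X × X | p.1 ≤ p.2}) :
    IsCountableUnionOfGraphs {p : X × X | p.2 < p.1} :=
  hgraphs.mono ((h.isCountableUnionOfGraphs_lt hgraphs hle).measurableSet.preimage measurable_swap)
    fun _ hp ↦ hE.symm (h.rel_of_le hp.le)

variable [StandardBorelSpace X]

theorem exists_transversal_compl_extremeFreePart (hE : Equivalence E) (h : IsChainColoring E c)
    (hgraphs : IsCountableUnionOfGraphs {p : X × X | E p.1 p.2})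
    (hle : MeasurableSet {p : X × X | p.1 ≤ p.2}) (hc : Measurable c) :
    ∃ T : Set X, MeasurableSet T ∧ T ⊆ (extremeFreePart E)ᶜ ∧
      ∀ x ∈ (extremeFreePart E)ᶜ, ∃! y, y ∈ T ∧ E x y := by
  classical
  have hmax := measurableSet_isMax (h.isCountableUnionOfGraphs_lt hgraphs hle)
  have hmin := measurableSet_isMin (h.isCountableUnionOfGraphs_gt hE hgraphs hle)
  let k (x : X) : ℕ := if IsMax x then 2 * c x else 2 * c x + 1
  have hk : Measurable k := .ite hmax (hc.const_mul 2) ((hc.const_mul 2).add_const 1)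
  have hk_inj : ∀ ⦃x y⦄, (IsMax x ∨ IsMin x) → (IsMax y ∨ IsMin y) → E x y → k x = k y →
      x = y := by
    intro x y hx hy hxy hkxy
    by_cases hx_max : IsMax x <;> by_cases hy_max : IsMax y <;>
      simp only [k, hx_max, hy_max, if_true, if_false] at hkxy
    · exact h.eq_of_isMax hx_max hy_max hxy (by omega)
    · omega
    · omega
    · exact h.eq_of_isMin (hx.resolve_left hx_max) (hy.resolve_left hy_max) hxy (by omega)
  obtain ⟨T, hT, hT_sub, hT_unique⟩ :=
    exists_transversal_of_coloring hE hgraphs (hmax.union hmin) hk hk_inj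
  exact ⟨T, hT, fun x hx hx_free ↦ hx_free ⟨x, hE.refl x, hT_sub hx⟩,
    fun x hx ↦ hT_unique x (not_not.1 hx)⟩

theorem measurableSet_extremeFreePart (hE : Equivalence E) (h : IsChainColoring E c)
    (hgraphs : IsCountableUnionOfGraphs {p : X × X | E p.1 p.2})
    (hle : MeasurableSet {p : X × X | p.1 ≤ p.2}) : MeasurableSet (extremeFreePart E) := by
  have hmax := measurableSet_isMax (h.isCountableUnionOfGraphs_lt hgraphs hle)
  have hmin := measurableSet_isMin (h.isCountableUnionOfGraphs_gt hE hgraphs hle)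
  exact (hgraphs.measurableSet_exists measurable_id (measurable_snd (hmax.union hmin))).compl

theorem exists_measurableEquiv_covBy [IsStronglyAtomic X] [IsStronglyCoatomic X]
    (hE : Equivalence E) (h : IsChainColoring E c)
    (hgraphs : IsCountableUnionOfGraphs {p : X × X | E p.1 p.2})
    (hle : MeasurableSet {p : X × X | p.1 ≤ p.2}) :
    ∃ T : X ≃ᵐ X, ∀ x ∈ extremeFreePart E, (T x ∈ extremeFreePart E ∧ x ⋖ T x) ∧
      (T.symm x ∈ extremeFreePart E ∧ T.symm x ⋖ x) := by
  have hinv := eInvariant_extremeFreePart hE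
  refine exists_measurableEquiv_of_existsUnique_mem (r := (· ⋖ ·))
    (measurableSet_covBy (h.isCountableUnionOfGraphs_lt hgraphs hle))
    (h.measurableSet_extremeFreePart hE hgraphs hle) (fun x hx ↦ ?_) (fun y hy ↦ ?_)
  · obtain ⟨_, hlt⟩ := not_isMax_iff.1 (not_isMax_of_mem_extremeFreePart hE hx)
    obtain ⟨y, hxy, -⟩ := exists_covBy_le_of_lt hlt
    exact ⟨y, ⟨hinv (h.rel_of_le hxy.le) hx, hxy⟩, fun _ hz ↦ h.covBy_right_unique hE hz.2 hxy⟩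
  · obtain ⟨_, hlt⟩ := not_isMin_iff.1 (not_isMin_of_mem_extremeFreePart hE hy)
    obtain ⟨x, -, hxy⟩ := exists_le_covBy_of_lt hlt
    exact ⟨x, ⟨hinv (hE.symm (h.rel_of_le hxy.le)) hy, hxy⟩,
      fun _ hz ↦ h.covBy_left_unique hE hz.2 hxy⟩

end IsChainColoring

end ChainColoring

section SeparatingColoring

variable [MeasurableSpace X] {E : X → X → Prop} {ρ : X → X → ℝ} {c : X → ℕ} {ε : ℝ}

namespace IsCocycle

theorem apply_self (hρ : IsCocycle E ρ) (hE : Equivalence E) (x : X) : ρ x x = 1 :=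
  (mul_eq_left₀ (hρ.2.1 (hE.refl x)).ne').1 (hρ.2.2 (hE.refl x) (hE.refl x)).symm

theorem apply_swap (hρ : IsCocycle E ρ) (hE : Equivalence E) {x y : X} (hxy : E x y) :
    ρ y x = (ρ x y)⁻¹ :=
  eq_inv_of_mul_eq_one_left ((hρ.2.2 (hE.symm hxy) hxy).symm.trans (hρ.apply_self hE y))

theorem log_sub_log (hρ : IsCocycle E ρ) (hE : Equivalence E) {x y z : X} (hxy : E x y)
    (hxz : E x z) : Real.log (ρ y x) - Real.log (ρ z x) = Real.log (ρ y z) := by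
  have hyz : E y z := hE.trans (hE.symm hxy) hxz
  rw [hρ.2.2 hyz (hE.symm hxz), Real.log_mul (hρ.2.1 hyz).ne' (hρ.2.1 (hE.symm hxz)).ne',
    add_sub_cancel_right]

end IsCocycle

/-- The points of each colour of `c` in each `E`-class are `ε`-separated on the logarithmic scale
of `ρ`. -/
def IsSeparatingColoring (E : X → X → Prop) (ρ : X → X → ℝ) (c : X → ℕ) (ε : ℝ) : Prop :=
  ∀ ⦃x y⦄, E x y → c x = c y → |Real.log (ρ x y)| < ε → x = y

theorem Smooth.exists_isSeparatingColoring (hsm : Smooth E ρ) (hρ : IsCocycle E ρ) :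
    ∃ c : X → ℕ, Measurable c ∧ ∃ ε > 0, IsSeparatingColoring E ρ c ε := by
  obtain ⟨U, hU, h_one, -, c, hc, hcol⟩ := hsm
  obtain ⟨ε, hε, hball⟩ :=
    Metric.isOpen_iff.1 (hU.preimage Real.continuous_exp) 0 (by simpa using h_one)
  refine ⟨c, hc, ε, hε, fun x y hxy hcxy hlog ↦ ?_⟩
  have hmem : ρ x y ∈ U := by
    simpa [Real.exp_log (hρ.2.1 hxy)] using hball (mem_ball_zero_iff.2 hlog)
  by_contra hne
  exact hcol (mem_univ x) (mem_univ y) hne hxy hmem hcxy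

/-- The order of increasing `ρ` on each colour class of `c` in each `E`-class, with points of
different colours or classes incomparable. -/
def ChainLE (E : X → X → Prop) (ρ : X → X → ℝ) (c : X → ℕ) (x y : X) : Prop :=
  E x y ∧ c x = c y ∧ ρ x y ≤ 1

theorem measurableSet_chainLE (hE : MeasurableSet {p : X × X | E p.1 p.2}) (hρ : IsCocycle E ρ)
    (hc : Measurable c) : MeasurableSet {p : X × X | ChainLE E ρ c p.1 p.2} :=
  hE.inter ((measurableSet_eq_fun (hc.comp measurable_fst) (hc.comp measurable_snd)).inter
    (measurableSet_le hρ.1 measurable_const))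

theorem chainLE_or_chainLE_iff (hE : Equivalence E) (hρ : IsCocycle E ρ) {x y : X} :
    ChainLE E ρ c x y ∨ ChainLE E ρ c y x ↔ E x y ∧ c x = c y := by
  refine ⟨?_, fun ⟨hxy, hcxy⟩ ↦ ?_⟩
  · rintro (⟨hxy, hcxy, -⟩ | ⟨hyx, hcyx, -⟩)
    exacts [⟨hxy, hcxy⟩, ⟨hE.symm hyx, hcyx.symm⟩]
  · obtain hle | hge := le_total (ρ x y) 1
    · exact .inl ⟨hxy, hcxy, hle⟩
    · exact .inr ⟨hE.symm hxy, hcxy.symm, hρ.apply_swap hE hxy ▸ inv_le_one_of_one_le₀ hge⟩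

namespace ChainLE

variable {x y z : X}

theorem trans (hE : Equivalence E) (hρ : IsCocycle E ρ) (hxy : ChainLE E ρ c x y)
    (hyz : ChainLE E ρ c y z) : ChainLE E ρ c x z := by
  obtain ⟨hEyz, hcyz, hle⟩ := hyz
  refine ⟨hE.trans hxy.1 hEyz, hxy.2.1.trans hcyz, ?_⟩
  rw [hρ.2.2 hxy.1 hEyz]
  exact mul_le_one₀ hxy.2.2 (hρ.2.1 hEyz).le hle

theorem eq_one (hE : Equivalence E) (hρ : IsCocycle E ρ) (hxy : ChainLE E ρ c x y)
    (hyx : ChainLE E ρ c y x) : ρ x y = 1 := by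
  refine hxy.2.2.antisymm ?_
  rw [hρ.apply_swap hE hyx.1]
  exact (one_le_inv₀ (hρ.2.1 hyx.1)).2 hyx.2.2

theorem lt_one (hE : Equivalence E) (hρ : IsCocycle E ρ) (hxy : ChainLE E ρ c x y)
    (hyx : ¬ ChainLE E ρ c y x) : ρ x y < 1 := by
  refine hxy.2.2.lt_of_ne fun h_one ↦ hyx ⟨hE.symm hxy.1, hxy.2.1.symm, ?_⟩
  rw [hρ.apply_swap hE hxy.1, h_one, inv_one]

theorem log_le_log (hE : Equivalence E) (hρ : IsCocycle E ρ) (hxy : ChainLE E ρ c x y)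
    (hzx : E z x) : Real.log (ρ x z) ≤ Real.log (ρ y z) := by
  rw [← sub_nonpos, hρ.log_sub_log hE hzx (hE.trans hzx hxy.1)]
  exact Real.log_nonpos (hρ.2.1 hxy.1).le hxy.2.2

end ChainLE

/-- The index of the interval of length `ε` containing the logarithmic position of `y` relative to
the base point `x`. -/
noncomputable def logBin (ρ : X → X → ℝ) (ε : ℝ) (x y : X) : ℤ :=
  ⌊Real.log (ρ y x) / ε⌋

namespace IsSeparatingColoring

theorem eq_of_logBin_eq (hE : Equivalence E) (hρ : IsCocycle E ρ) (hε : 0 < ε)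
    (hsep : IsSeparatingColoring E ρ c ε) {x y z : X} (hxy : E x y) (hxz : E x z)
    (hc : c y = c z) (hbin : logBin ρ ε x y = logBin ρ ε x z) : y = z := by
  refine hsep (hE.trans (hE.symm hxy) hxz) hc ?_
  have h_abs := Int.abs_sub_lt_one_of_floor_eq_floor hbin
  rwa [← sub_div, hρ.log_sub_log hE hxy hxz, abs_div, abs_of_pos hε, div_lt_one hε] at h_abs

theorem isCountableUnionOfGraphs (hE : Equivalence E)
    (hE_meas : MeasurableSet {p : X × X | E p.1 p.2}) (hρ : IsCocycle E ρ) (hc : Measurable c)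
    (hε : 0 < ε) (hsep : IsSeparatingColoring E ρ c ε) :
    IsCountableUnionOfGraphs {p : X × X | E p.1 p.2} := by
  have h_bin : Measurable fun p : X × X ↦ logBin ρ ε p.1 p.2 :=
    ((hρ.1.comp measurable_swap).log.div_const ε).floor
  refine isCountableUnionOfGraphs_of_injOn (κ := fun p ↦ (c p.2, logBin ρ ε p.1 p.2)) hE_meas
    ((hc.comp measurable_snd).prodMk h_bin) ?_
  rintro ⟨x, y⟩ hxy ⟨x', z⟩ hxz hκ
  obtain ⟨rfl, hκ⟩ := Prod.mk.inj hκ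
  obtain ⟨hcyz, hbin⟩ := Prod.mk.inj hκ
  exact Prod.ext rfl (hsep.eq_of_logBin_eq hE hρ hε hxy hxz hcyz hbin)

theorem finite_chainLE_between (hE : Equivalence E) (hρ : IsCocycle E ρ) (hε : 0 < ε)
    (hsep : IsSeparatingColoring E ρ c ε) (x y : X) :
    {z | ChainLE E ρ c x z ∧ ChainLE E ρ c z y}.Finite := by
  refine .of_injOn (f := logBin ρ ε x) (t := Icc (logBin ρ ε x x) (logBin ρ ε x y)) ?_ ?_
    (finite_Icc _ _)
  · rintro z ⟨hxz, hzy⟩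
    have h_lower := hxz.log_le_log hE hρ (hE.refl x)
    have h_upper := hzy.log_le_log hE hρ hxz.1
    constructor <;> unfold logBin <;> gcongr
  · rintro z ⟨hxz, -⟩ w ⟨hxw, -⟩ hbin
    exact hsep.eq_of_logBin_eq hE hρ hε hxz.1 hxw.1 (hxz.2.1.symm.trans hxw.2.1) hbin

/-- `ChainLE` as a partial order; separation of the colour classes gives antisymmetry. -/
abbrev chainOrder (hE : Equivalence E) (hρ : IsCocycle E ρ) (hε : 0 < ε)
    (hsep : IsSeparatingColoring E ρ c ε) : PartialOrder X where
  le := ChainLE E ρ c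
  le_refl x := ⟨hE.refl x, rfl, (hρ.apply_self hE x).le⟩
  le_trans _ _ _ hxy hyz := hxy.trans hE hρ hyz
  le_antisymm _ _ hxy hyx := hsep hxy.1 hxy.2.1 (by simpa [hxy.eq_one hE hρ hyx] using hε)

end IsSeparatingColoring

end SeparatingColoring

theorem eSize_fiber_equiv {Y : Type*} (ρ : X → X → ℝ) (T : X ≃ Y) {B : Set X} {y : Y}
    (hy : T.symm y ∈ B) (z : X) :
    eSize ρ {x | x ∈ B ∧ T x = y} z = ENNReal.ofReal (ρ (T.symm y) z) := by
  have h_fiber : {x | x ∈ B ∧ T x = y} = {T.symm y} := by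
    ext x
    refine ⟨fun h ↦ T.eq_symm_apply.2 h.2, ?_⟩
    rintro rfl
    exact ⟨hy, T.apply_symm_apply y⟩
  rw [h_fiber]
  exact tsum_singleton (T.symm y) fun x ↦ ENNReal.ofReal (ρ x z)

/-- If `ρ` is smooth, then there is an `E`-invariant Borel set `B` such that `E` restricted to
`Bᶜ` is smooth (admits a Borel transversal) and there is a strictly
`(ρ ↾ (E ↾ B))`-increasing Borel automorphism of `B`. -/
theorem stmt7 [MeasurableSpace X] [StandardBorelSpace X]
    (E : X → X → Prop) (hE : IsCBER E)
    (ρ : X → X → ℝ) (hρ : IsCocycle E ρ) (hsm : Smooth E ρ) :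
    ∃ B : Set X, MeasurableSet B ∧ EInvariant E B ∧
      (∃ T : Set X, MeasurableSet T ∧ T ⊆ Bᶜ ∧ ∀ x ∈ Bᶜ, ∃! y, y ∈ T ∧ E x y) ∧
      ∃ T : X ≃ᵐ X, (∀ x ∈ B, T x ∈ B ∧ E x (T x)) ∧ (∀ x ∈ B, T.symm x ∈ B) ∧
        ∀ x ∈ B, eSize ρ {y | y ∈ B ∧ T y = x} x < 1 := by
  obtain ⟨hE_equiv, hE_meas, -⟩ := hE
  obtain ⟨c, hc, ε, hε, hsep⟩ := hsm.exists_isSeparatingColoring hρ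
  let _ : PartialOrder X := hsep.chainOrder hE_equiv hρ hε
  let _ : LocallyFiniteOrder X := .ofFiniteIcc (hsep.finite_chainLE_between hE_equiv hρ hε)
  have : IsStronglyAtomic X := isStronglyAtomic_of_locallyFiniteOrder
  have : IsStronglyCoatomic X := isStronglyCoatomic_of_locallyFiniteOrder
  have hgraphs := hsep.isCountableUnionOfGraphs hE_equiv hE_meas hρ hc hε
  have hle : MeasurableSet {p : X × X | p.1 ≤ p.2} := measurableSet_chainLE hE_meas hρ hc
  have hchain : IsChainColoring E c := fun _ _ ↦ chainLE_or_chainLE_iff hE_equiv hρ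
  obtain ⟨T, hT⟩ := hchain.exists_measurableEquiv_covBy hE_equiv hgraphs hle
  refine ⟨extremeFreePart E, hchain.measurableSet_extremeFreePart hE_equiv hgraphs hle,
    eInvariant_extremeFreePart hE_equiv,
    hchain.exists_transversal_compl_extremeFreePart hE_equiv hgraphs hle hc, T,
    fun x hx ↦ ⟨(hT x hx).1.1, hchain.rel_of_le (hT x hx).1.2.le⟩, fun x hx ↦ (hT x hx).2.1,
    fun x hx ↦ ?_⟩
  obtain ⟨-, hx_symm, hcov⟩ := hT x hx
  have h_lt : ρ (T.symm x) x < 1 := ChainLE.lt_one hE_equiv hρ hcov.le hcov.lt.not_ge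
  exact (eSize_fiber_equiv ρ T.toEquiv hx_symm x).trans_lt (ENNReal.ofReal_lt_one.2 h_lt)

end CocycleNadkarni
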